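/- The weighted spherical mean of the product Bessel kernel is a Bessel multiplier: M_μ^γ 𝐣_γ(x, ξ) = 𝐣_γ(x, ξ) · j_{(n+|γ|−2)/2}(μ) for |ξ| = 1, and consequently the iterated mean satisfies I_{λ,μ}^γ 𝐣_γ(x, ξ) = 𝐣_γ(x, ξ) · j_{(n+|γ|−2)/2}(μ) · j_{(n+|γ|−2)/2}(λ). -/

import Mathlib

open MeasureTheory Real Set Metric

noncomputable section

/-- The part of the unit sphere in the open positive orthant. -/
def sphPos (n : ℕ) : Set (Metric.sphere (0 : EuclideanSpace ℝ (Fin n)) 1) :=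
  {x | ∀ i, 0 < (x : EuclideanSpace ℝ (Fin n)) i}

/-- Surface measure on the unit sphere of `ℝⁿ`. -/
def sphMeasure (n : ℕ) : Measure (Metric.sphere (0 : EuclideanSpace ℝ (Fin n)) 1) :=
  (volume : Measure (EuclideanSpace ℝ (Fin n))).toSphere

/-- The multidimensional generalized translation
`T^y f(x) = ∏ᵢ (^{γᵢ}𝒯_{xᵢ}^{yᵢ} f)(x)`, written as an `n`-fold integral. -/
def multiT (n : ℕ) (γ : Fin n → ℝ) (f : (Fin n → ℝ) → ℝ) (x y : Fin n → ℝ) : ℝ :=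
  (∏ i, Real.Gamma ((γ i + 1) / 2) / (Real.sqrt π * Real.Gamma (γ i / 2))) *
    ∫ α in Set.pi Set.univ (fun _ : Fin n => Ioc (0:ℝ) π),
      f (fun i => Real.sqrt ((x i) ^ 2 + (y i) ^ 2 - 2 * x i * y i * Real.cos (α i))) *
        ∏ i, Real.sin (α i) ^ (γ i - 1)

/-- The normalizing constant `|S₁⁺(n)|_γ = ∫_{S₁⁺(n)} y^γ dS(y)`. -/
def sphConst (n : ℕ) (γ : Fin n → ℝ) : ℝ :=
  ∫ y in sphPos n, ∏ i, ((y : EuclideanSpace ℝ (Fin n)) i) ^ (γ i) ∂(sphMeasure n)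

/-- The weighted spherical mean
`M_r^γ f(x) = (1/|S₁⁺(n)|_γ) ∫_{S₁⁺(n)} T^{ry} f(x) y^γ dS(y)`. -/
def sMean (n : ℕ) (γ : Fin n → ℝ) (f : (Fin n → ℝ) → ℝ) (x : Fin n → ℝ) (r : ℝ) : ℝ :=
  (1 / sphConst n γ) *
    ∫ y in sphPos n,
      multiT n γ f x (fun i => r * (y : EuclideanSpace ℝ (Fin n)) i) *
        ∏ i, ((y : EuclideanSpace ℝ (Fin n)) i) ^ (γ i) ∂(sphMeasure n)

/-- The iterated weighted spherical mean `I_f^γ(x; λ, μ) = M_λ^γ M_μ^γ f(x)`. -/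
def iMean (n : ℕ) (γ : Fin n → ℝ) (f : (Fin n → ℝ) → ℝ) (x : Fin n → ℝ)
    (lam mu : ℝ) : ℝ :=
  sMean n γ (fun z => sMean n γ f z mu) x lam

/-- The normalized Bessel function `j_ω`, via the Poisson integral representation
`j_ω(t) = (Γ(ω+1)/(√π Γ(ω+1/2))) ∫_0^π cos(t cos θ) sin^{2ω} θ dθ`,
which for `ω > -1/2` agrees with `Γ(ω+1)(2/t)^ω J_ω(t)`. -/
def normBessel (ω t : ℝ) : ℝ :=
  (Real.Gamma (ω + 1) / (Real.sqrt π * Real.Gamma (ω + 1 / 2))) *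
    ∫ θ in (0:ℝ)..π, Real.cos (t * Real.cos θ) * Real.sin θ ^ (2 * ω)

/-- The product Bessel kernel `𝐣_γ(x, ξ) = ∏ᵢ j_{(γᵢ−1)/2}(xᵢ ξᵢ)`. -/
def besselKernel (n : ℕ) (γ : Fin n → ℝ) (x ξ : Fin n → ℝ) : ℝ :=
  ∏ i, normBessel ((γ i - 1) / 2) (x i * ξ i)


lemma Real.rpow_one_add_of_pos {a : ℝ} (ha : 0 < a) (b : ℝ) : a ^ (1 + b) = a * a ^ b := by
  rw [Real.rpow_add ha, Real.rpow_one]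

lemma real_beta_integral {u v : ℝ} (hu : 0 < u) (hv : 0 < v) :
    ∫ x in Ioo (0:ℝ) 1, x ^ (u - 1) * (1 - x) ^ (v - 1) =
      Real.Gamma u * Real.Gamma v / Real.Gamma (u + v) := by
  have h := ProbabilityTheory.beta_eq_betaIntegralReal u v hu hv
  rw [ProbabilityTheory.beta, Complex.betaIntegral,
    intervalIntegral.integral_of_le zero_le_one, integral_Ioc_eq_integral_Ioo] at h
  rw [h, ← Complex.ofReal_re (∫ x in Ioo (0:ℝ) 1, x ^ (u - 1) * (1 - x) ^ (v - 1)),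
    ← integral_complex_ofReal]
  congr 1
  refine setIntegral_congr_fun measurableSet_Ioo fun x hx => ?_
  rw [Complex.ofReal_mul, Complex.ofReal_cpow hx.1.le, Complex.ofReal_cpow (by linarith [hx.2])]
  push_cast
  rfl

lemma integral_sin_rpow_two_mul {ω : ℝ} (hω : -(1 / 2) < ω) :
    ∫ θ in (0:ℝ)..π, Real.sin θ ^ (2 * ω) =
      Real.sqrt π * Real.Gamma (ω + 1 / 2) / Real.Gamma (ω + 1) := by
  have himg : (fun θ => (1 + Real.cos θ) / 2) '' Ioo 0 π = Ioo (0:ℝ) 1 := by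
    ext t
    constructor
    · rintro ⟨θ, hθ, rfl⟩
      have h0 := Real.cos_lt_cos_of_nonneg_of_le_pi le_rfl hθ.2.le hθ.1
      have h1 := Real.cos_lt_cos_of_nonneg_of_le_pi hθ.1.le le_rfl hθ.2
      rw [Real.cos_zero] at h0
      rw [Real.cos_pi] at h1
      constructor <;> simp only <;> linarith
    · intro ht
      refine ⟨Real.arccos (2 * t - 1), ⟨Real.arccos_pos.2 (by linarith [ht.2]), ?_⟩, ?_⟩
      · refine lt_of_le_of_ne (Real.arccos_le_pi _) fun h => ?_
        rw [Real.arccos_eq_pi] at h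
        linarith [ht.1]
      · simp only
        rw [Real.cos_arccos (by linarith [ht.1]) (by linarith [ht.2])]
        ring
  have hinj : InjOn (fun θ => (1 + Real.cos θ) / 2) (Ioo 0 π) := by
    intro a ha b hb hab
    refine Real.injOn_cos (Ioo_subset_Icc_self ha) (Ioo_subset_Icc_self hb) ?_
    simp only at hab
    linarith
  have hd : ∀ θ ∈ Ioo (0:ℝ) π,
      HasDerivWithinAt (fun θ => (1 + Real.cos θ) / 2) (-Real.sin θ / 2) (Ioo 0 π) θ :=
    fun θ _ => (((Real.hasDerivAt_cos θ).const_add 1).div_const 2).hasDerivWithinAt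
  have hcov := integral_image_eq_integral_abs_deriv_smul measurableSet_Ioo hd hinj
    (fun t : ℝ => t ^ (ω + 1 / 2 - 1) * (1 - t) ^ (ω + 1 / 2 - 1))
  rw [himg, real_beta_integral (by linarith) (by linarith)] at hcov
  have hint : ∫ θ in Ioo (0:ℝ) π, |-Real.sin θ / 2| •
      (((1 + Real.cos θ) / 2) ^ (ω + 1 / 2 - 1) * (1 - (1 + Real.cos θ) / 2) ^ (ω + 1 / 2 - 1)) =
      ∫ θ in Ioo (0:ℝ) π, (2:ℝ) ^ (-(2 * ω)) * Real.sin θ ^ (2 * ω) := by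
    refine setIntegral_congr_fun measurableSet_Ioo fun θ hθ => ?_
    have hs : 0 < Real.sin θ := Real.sin_pos_of_mem_Ioo hθ
    have h1 := Real.neg_one_le_cos θ
    have h2 := Real.cos_le_one θ
    simp only [smul_eq_mul]
    rw [← Real.mul_rpow (by linarith) (by linarith),
      show (1 + Real.cos θ) / 2 * (1 - (1 + Real.cos θ) / 2) = (Real.sin θ / 2) ^ (2:ℝ) by
        rw [Real.rpow_two]; nlinarith [Real.sin_sq_add_cos_sq θ],
      ← Real.rpow_mul (by positivity), abs_div, abs_neg, abs_of_pos hs, abs_of_pos two_pos,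
      ← Real.rpow_one_add_of_pos (by positivity),
      show 1 + 2 * (ω + 1 / 2 - 1) = 2 * ω by ring, Real.div_rpow hs.le two_pos.le,
      Real.rpow_neg two_pos.le]
    ring
  rw [hint, integral_const_mul] at hcov
  rw [intervalIntegral.integral_of_le Real.pi_pos.le, integral_Ioc_eq_integral_Ioo]
  have hdup := Real.Gamma_mul_Gamma_add_half (ω + 1 / 2)
  rw [show ω + 1 / 2 + 1 / 2 = ω + 1 by ring,
    show 2 * (ω + 1 / 2) = 2 * ω + 1 by ring, show 1 - (2 * ω + 1) = -(2 * ω) by ring] at hdup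
  rw [show ω + 1 / 2 + (ω + 1 / 2) = 2 * ω + 1 by ring] at hcov
  have g1 : 0 < Real.Gamma (ω + 1 / 2) := Real.Gamma_pos_of_pos (by linarith)
  have g2 : 0 < Real.Gamma (ω + 1) := Real.Gamma_pos_of_pos (by linarith)
  have g3 : 0 < Real.Gamma (2 * ω + 1) := Real.Gamma_pos_of_pos (by linarith)
  have hp : 0 < (2:ℝ) ^ (-(2 * ω)) := by positivity
  rw [div_eq_iff g3.ne'] at hcov
  rw [eq_div_iff g2.ne']
  apply mul_left_cancel₀ (mul_ne_zero g3.ne' hp.ne')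
  linear_combination (-Real.Gamma (ω + 1)) * hcov + Real.Gamma (ω + 1 / 2) * hdup

lemma intervalIntegrable_sin_rpow {ω : ℝ} (hω : -(1 / 2) < ω) :
    IntervalIntegrable (fun θ => Real.sin θ ^ (2 * ω)) volume 0 π := by
  by_contra h
  have h1 := integral_sin_rpow_two_mul hω
  rw [intervalIntegral.integral_undef h] at h1
  have g1 : 0 < Real.Gamma (ω + 1 / 2) := Real.Gamma_pos_of_pos (by linarith)
  have g2 : 0 < Real.Gamma (ω + 1) := Real.Gamma_pos_of_pos (by linarith)
  have : 0 < Real.sqrt π * Real.Gamma (ω + 1 / 2) / Real.Gamma (ω + 1) := by positivity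
  linarith

/-- The normalizing constant of the weight `sin ^ (2 * ω)` on `[0, π]`. -/
def sinConst (ω : ℝ) : ℝ := Real.Gamma (ω + 1) / (Real.sqrt π * Real.Gamma (ω + 1 / 2))

lemma intervalIntegrable_mul_sin_rpow {ω : ℝ} (hω : -(1 / 2) < ω) {f : ℝ → ℝ}
    (hf : Continuous f) :
    IntervalIntegrable (fun θ => f θ * Real.sin θ ^ (2 * ω)) volume 0 π :=
  (intervalIntegrable_sin_rpow hω).continuousOn_mul hf.continuousOn

lemma sinConst_mul_integral_cos_even {ω : ℝ} (hω : -(1 / 2) < ω) (k : ℕ) :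
    sinConst ω * ∫ θ in (0:ℝ)..π, Real.cos θ ^ (2 * k) * Real.sin θ ^ (2 * ω) =
      (2 * k).factorial / (4 ^ k * k.factorial) * (Real.Gamma (ω + 1) / Real.Gamma (ω + 1 + k)) := by
  have g1 : 0 < Real.Gamma (ω + 1 / 2) := Real.Gamma_pos_of_pos (by linarith)
  have g2 : 0 < Real.Gamma (ω + 1) := Real.Gamma_pos_of_pos (by linarith)
  induction k with
  | zero =>
    simp only [mul_zero, pow_zero, one_mul, integral_sin_rpow_two_mul hω, sinConst]
    have : 0 < Real.sqrt π := by positivity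
    generalize Real.Gamma (ω + 1 / 2) = G at *
    simp [field]
  | succ k ih =>
    have hi := fun m : ℕ => intervalIntegrable_mul_sin_rpow hω (f := fun θ => Real.cos θ ^ m)
      (by fun_prop)
    have hftc := intervalIntegral.integral_eq_sub_of_hasDerivAt_of_le Real.pi_pos.le
      (f := fun θ => Real.cos θ ^ (2 * k + 1) * Real.sin θ ^ (2 * ω + 1))
      (f' := fun θ => (2 * ω + 2 * k + 2) * (Real.cos θ ^ (2 * (k + 1)) * Real.sin θ ^ (2 * ω)) -
        (2 * k + 1) * (Real.cos θ ^ (2 * k) * Real.sin θ ^ (2 * ω)))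
      (by
        refine ContinuousOn.mul (by fun_prop) ?_
        exact (Real.continuous_sin.rpow_const fun θ => Or.inr (by linarith)).continuousOn)
      (by
        intro θ hθ
        have hs : 0 < Real.sin θ := Real.sin_pos_of_mem_Ioo hθ
        have h := ((Real.hasDerivAt_cos θ).pow (2 * k + 1)).mul
          ((Real.hasDerivAt_sin θ).rpow_const (p := 2 * ω + 1) (Or.inl hs.ne'))
        refine h.congr_deriv ?_
        simp only [Pi.pow_apply, add_sub_cancel_right, Nat.add_sub_cancel]
        rw [Real.rpow_add_one hs.ne']
        push_cast
        have h2 : Real.sin θ * Real.sin θ = 1 - Real.cos θ ^ 2 := by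
          nlinarith [Real.sin_sq_add_cos_sq θ]
        linear_combination (-(2 * k + 1) * Real.cos θ ^ (2 * k) * Real.sin θ ^ (2 * ω)) * h2)
      (((hi _).const_mul _).sub ((hi _).const_mul _))
    rw [intervalIntegral.integral_sub ((hi _).const_mul _) ((hi _).const_mul _),
      intervalIntegral.integral_const_mul, intervalIntegral.integral_const_mul] at hftc
    simp only [Real.sin_pi, Real.sin_zero, Real.zero_rpow (show 2 * ω + 1 ≠ 0 by linarith),
      mul_zero, sub_zero] at hftc
    have hpos : 0 < ω + 1 + k := by have : (0:ℝ) ≤ k := k.cast_nonneg; linarith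
    have hG : Real.Gamma (ω + 1 + (k + 1 : ℕ)) = (ω + 1 + k) * Real.Gamma (ω + 1 + k) := by
      rw [← Real.Gamma_add_one hpos.ne']; push_cast; ring_nf
    have g3 : 0 < Real.Gamma (ω + 1 + k) := Real.Gamma_pos_of_pos hpos
    rw [hG, show 2 * (k + 1) = 2 * k + 1 + 1 by ring, Nat.factorial_succ (2 * k + 1),
      Nat.factorial_succ (2 * k), Nat.factorial_succ k]
    rw [show 2 * (k + 1) = 2 * k + 1 + 1 by ring] at hftc
    have hk : (0:ℝ) < k.factorial := by positivity
    apply mul_left_cancel₀ (show (2 * ω + 2 * k + 2) ≠ 0 by linarith)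
    trans (2 * k + 1) * (sinConst ω *
      ∫ θ in (0:ℝ)..π, Real.cos θ ^ (2 * k) * Real.sin θ ^ (2 * ω))
    · linear_combination sinConst ω * hftc
    · rw [ih]
      push_cast
      field_simp
      ring

lemma integral_cos_odd (ω : ℝ) (k : ℕ) :
    ∫ θ in (0:ℝ)..π, Real.cos θ ^ (2 * k + 1) * Real.sin θ ^ (2 * ω) = 0 := by
  have h := intervalIntegral.integral_comp_sub_left
    (fun θ => Real.cos θ ^ (2 * k + 1) * Real.sin θ ^ (2 * ω)) (a := 0) (b := π) π
  simp only [Real.cos_pi_sub, Real.sin_pi_sub, sub_self, sub_zero,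
    Odd.neg_pow (odd_two_mul_add_one k), neg_mul, intervalIntegral.integral_neg] at h
  linarith

/-- The coefficients of the power series of the normalized Bessel function. -/
def besselCoeff (ω : ℝ) (k : ℕ) : ℝ :=
  Real.Gamma (ω + 1) / (k.factorial * Real.Gamma (ω + 1 + k))

lemma besselCoeff_pos {ω : ℝ} (hω : -(1 / 2) < ω) (k : ℕ) : 0 < besselCoeff ω k := by
  have hk : (0:ℝ) ≤ k := k.cast_nonneg
  have g2 : 0 < Real.Gamma (ω + 1) := Real.Gamma_pos_of_pos (by linarith)
  have g3 : 0 < Real.Gamma (ω + 1 + k) := Real.Gamma_pos_of_pos (by linarith)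
  unfold besselCoeff
  positivity

lemma hasSum_normBessel {ω : ℝ} (hω : -(1 / 2) < ω) (t : ℝ) :
    HasSum (fun k : ℕ => besselCoeff ω k * (-(t ^ 2 / 4)) ^ k) (normBessel ω t) := by
  have h := intervalIntegral.hasSum_integral_of_dominated_convergence (μ := volume)
    (a := 0) (b := π)
    (F := fun (k : ℕ) θ => (-1) ^ k * (t * Real.cos θ) ^ (2 * k) / (2 * k).factorial *
      Real.sin θ ^ (2 * ω))
    (f := fun θ => Real.cos (t * Real.cos θ) * Real.sin θ ^ (2 * ω))
    (fun k θ => |t| ^ (2 * k) / (2 * k).factorial * ‖Real.sin θ ^ (2 * ω)‖)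
    (fun k => (intervalIntegrable_mul_sin_rpow hω (by fun_prop)).aestronglyMeasurable_restrict_uIoc)
    (fun k => ae_of_all _ fun θ _ => by
      rw [norm_mul, norm_div, norm_mul, norm_pow, norm_pow, norm_mul, norm_neg, norm_one, one_pow,
        one_mul, Real.norm_natCast, Real.norm_eq_abs t, Real.norm_eq_abs (Real.cos θ)]
      gcongr
      exact mul_le_of_le_one_right (abs_nonneg t) (Real.abs_cos_le_one θ))
    (ae_of_all _ fun θ _ => (Real.hasSum_cosh |t|).summable.mul_right _)
    (by
      simp_rw [tsum_mul_right]
      exact (intervalIntegrable_sin_rpow hω).norm.const_mul _)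
    (ae_of_all _ fun θ _ => (Real.hasSum_cos _).mul_right _)
  have h2 : HasSum _ (normBessel ω t) := h.mul_left (sinConst ω)
  convert h2 using 1
  funext k
  symm
  have e : ∀ θ, (-1) ^ k * (t * Real.cos θ) ^ (2 * k) / (2 * k).factorial *
      Real.sin θ ^ (2 * ω) = ((-1) ^ k * t ^ (2 * k) / (2 * k).factorial) *
      (Real.cos θ ^ (2 * k) * Real.sin θ ^ (2 * ω)) := fun θ => by rw [mul_pow]; ring
  simp_rw [e]
  rw [intervalIntegral.integral_const_mul, mul_left_comm, sinConst_mul_integral_cos_even hω,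
    neg_pow (t ^ 2 / 4), div_pow, ← pow_mul, besselCoeff]
  have : (0:ℝ) < (2 * k).factorial := by positivity
  field_simp

lemma summable_besselCoeff {ω : ℝ} (hω : -(1 / 2) < ω) {s : ℝ} (hs : 0 ≤ s) :
    Summable (fun k : ℕ => besselCoeff ω k * s ^ k) := by
  have h := (hasSum_normBessel hω (2 * Real.sqrt s)).summable.abs
  refine h.congr fun k => ?_
  rw [abs_mul, abs_of_pos (besselCoeff_pos hω k), abs_pow, abs_neg, mul_pow, Real.sq_sqrt hs]
  congr 2
  rw [abs_of_nonneg (by positivity)]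
  ring

lemma sum_choose_mul_descFactorial_div_Gamma (p k : ℕ) {a : ℝ} (ha : 0 < a) :
    ∑ l ∈ Finset.range (k + 1), (k.choose l : ℝ) * (p.descFactorial l / Real.Gamma (a + l)) =
      Real.Gamma (a + p + k) / (Real.Gamma (a + p) * Real.Gamma (a + k)) := by
  induction k generalizing a with
  | zero =>
    have : 0 < Real.Gamma (a + p) := Real.Gamma_pos_of_pos (by positivity)
    simp [field]
  | succ k ih =>
    rw [Finset.sum_choose_succ_mul (fun l _ => (p.descFactorial l / Real.Gamma (a + l) : ℝ)),
      ← Finset.sum_add_distrib]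
    trans (a + p) * ∑ l ∈ Finset.range (k + 1),
      (k.choose l : ℝ) * (p.descFactorial l / Real.Gamma (a + 1 + l))
    · rw [Finset.mul_sum]
      refine Finset.sum_congr rfl fun l _ => ?_
      have hal : 0 < a + l := by positivity
      have g : 0 < Real.Gamma (a + l) := Real.Gamma_pos_of_pos hal
      have h1 : Real.Gamma (a + 1 + l) = (a + l) * Real.Gamma (a + l) := by
        rw [← Real.Gamma_add_one hal.ne']; ring_nf
      have h2 : a + ((l + 1 : ℕ) : ℝ) = a + 1 + l := by push_cast; ring
      have h3 : (p.descFactorial (l + 1) : ℝ) = (p - l) * p.descFactorial l := by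
        rw [Nat.descFactorial_succ]
        rcases le_or_gt l p with h | h
        · push_cast [Nat.cast_sub h]; ring
        · simp [Nat.descFactorial_of_lt h]
      rw [h2, h1, h3]
      field_simp
      ring
    · rw [ih (by positivity)]
      have hap : 0 < a + p := by positivity
      have g : 0 < Real.Gamma (a + p) := Real.Gamma_pos_of_pos hap
      have h1 : Real.Gamma (a + 1 + p) = (a + p) * Real.Gamma (a + p) := by
        rw [← Real.Gamma_add_one hap.ne']; ring_nf
      have g2 : 0 < Real.Gamma (a + 1 + k) := Real.Gamma_pos_of_pos (by positivity)
      have h2 : a + ((k + 1 : ℕ) : ℝ) = a + 1 + k := by push_cast; ring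
      have h3 : a + p + ((k + 1 : ℕ) : ℝ) = a + 1 + p + k := by push_cast; ring
      rw [h1, h2, h3]
      field_simp

lemma sum_inv_factorial_div_Gamma (k p : ℕ) {a : ℝ} (ha : 0 < a) :
    ∑ l ∈ Finset.range (min k p + 1),
        (1 : ℝ) / ((k - l).factorial * (p - l).factorial * l.factorial * Real.Gamma (a + l)) =
      Real.Gamma (a + k + p) /
        (k.factorial * p.factorial * Real.Gamma (a + k) * Real.Gamma (a + p)) := by
  have h := sum_choose_mul_descFactorial_div_Gamma p k ha
  have hsub : Finset.range (min k p + 1) ⊆ Finset.range (k + 1) := by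
    intro l; simp only [Finset.mem_range]; omega
  rw [← Finset.sum_subset hsub] at h
  · rw [show a + k + p = a + p + k by ring]
    trans (1 / (k.factorial * p.factorial)) *
      (Real.Gamma (a + p + k) / (Real.Gamma (a + p) * Real.Gamma (a + k)))
    · rw [← h, Finset.mul_sum]
      refine Finset.sum_congr rfl fun l hl => ?_
      rw [Finset.mem_range] at hl
      have hk : l ≤ k := by omega
      have hp : l ≤ p := by omega
      have g : 0 < Real.Gamma (a + l) := Real.Gamma_pos_of_pos (by positivity)
      have h1 : (k.choose l : ℝ) * l.factorial * (k - l).factorial = k.factorial := by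
        exact_mod_cast Nat.choose_mul_factorial_mul_factorial hk
      have h2 : ((p - l).factorial : ℝ) * p.descFactorial l = p.factorial := by
        exact_mod_cast Nat.factorial_mul_descFactorial hp
      have h3 : (p.descFactorial l : ℝ) ≠ 0 := by
        exact_mod_cast (Nat.descFactorial_pos.2 hp).ne'
      have h4 : (k.choose l : ℝ) ≠ 0 := by exact_mod_cast (Nat.choose_pos hk).ne'
      rw [← h1, ← h2]
      field_simp
    · ring
  · intro l hl hl'
    simp only [Finset.mem_range] at hl hl'
    rw [Nat.descFactorial_of_lt (by omega)]
    simp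

lemma sum_range_eq_sum_even {M : Type*} [AddCommMonoid M] (m : ℕ) (f : ℕ → M)
    (hf : ∀ l, f (2 * l + 1) = 0) :
    ∑ j ∈ Finset.range (m + 1), f j = ∑ l ∈ Finset.range (m / 2 + 1), f (2 * l) := by
  rw [← Finset.sum_image (g := fun l => 2 * l) (f := f) (by intro a _ b _ h; simpa using h)]
  symm
  apply Finset.sum_subset
  · intro j
    simp only [Finset.mem_image, Finset.mem_range]
    rintro ⟨l, hl, rfl⟩
    omega
  · intro j hj hj'
    rcases Nat.even_or_odd' j with ⟨l, rfl | rfl⟩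
    · exfalso
      simp only [Finset.mem_image, Finset.mem_range] at hj hj'
      exact hj' ⟨l, by omega, rfl⟩
    · exact hf l

lemma sum_antidiagonal_sum_min {M : Type*} [AddCommMonoid M] (m : ℕ) (g : ℕ → ℕ → ℕ → M) :
    ∑ l ∈ Finset.range (m / 2 + 1), ∑ ij ∈ Finset.HasAntidiagonal.antidiagonal (m - 2 * l), g ij.1 ij.2 l =
      ∑ kp ∈ Finset.HasAntidiagonal.antidiagonal m, ∑ l ∈ Finset.range (min kp.1 kp.2 + 1),
        g (kp.1 - l) (kp.2 - l) l := by
  rw [Finset.sum_sigma', Finset.sum_sigma']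
  refine Finset.sum_bij' (fun q _ => ⟨(q.2.1 + q.1, q.2.2 + q.1), q.1⟩)
    (fun q _ => ⟨q.2, (q.1.1 - q.2, q.1.2 - q.2)⟩) ?_ ?_ ?_ ?_ ?_
  · rintro ⟨l, i, j⟩ h
    simp only [Finset.mem_sigma, Finset.mem_range, Finset.HasAntidiagonal.mem_antidiagonal] at h ⊢
    omega
  · rintro ⟨⟨k, p⟩, l⟩ h
    simp only [Finset.mem_sigma, Finset.mem_range, Finset.HasAntidiagonal.mem_antidiagonal] at h ⊢
    omega
  · rintro ⟨l, i, j⟩ h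
    simp
  · rintro ⟨⟨k, p⟩, l⟩ h
    simp only [Finset.mem_sigma, Finset.mem_range, Finset.HasAntidiagonal.mem_antidiagonal] at h
    have h1 : k - l + l = k := by omega
    have h2 : p - l + l = p := by omega
    simp [h1, h2]
  · rintro ⟨l, i, j⟩ h
    simp

lemma pow_add_div_factorial (X Y : ℝ) (d : ℕ) :
    (X + Y) ^ d / d.factorial =
      ∑ ij ∈ Finset.HasAntidiagonal.antidiagonal d, X ^ ij.1 / ij.1.factorial * (Y ^ ij.2 / ij.2.factorial) := by
  rw [(Commute.all X Y).add_pow', Finset.sum_div]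
  refine Finset.sum_congr rfl fun ij h => ?_
  rw [Finset.HasAntidiagonal.mem_antidiagonal] at h
  have h1 : (d.choose ij.1 : ℝ) * ij.1.factorial * ij.2.factorial = d.factorial := by
    rw [← h, Nat.choose_symm_add]
    exact_mod_cast Nat.add_choose_mul_factorial_mul_factorial _ _
  rw [nsmul_eq_mul, ← h1]
  have h4 : (d.choose ij.1 : ℝ) ≠ 0 := by exact_mod_cast (Nat.choose_pos (by omega)).ne'
  field_simp

lemma besselCoeff_mul_integral_pow {ω : ℝ} (hω : -(1 / 2) < ω) (x y : ℝ) (m : ℕ) :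
    besselCoeff ω m * (sinConst ω * ∫ θ in (0:ℝ)..π,
        (x ^ 2 + y ^ 2 - 2 * x * y * Real.cos θ) ^ m * Real.sin θ ^ (2 * ω)) =
      ∑ kp ∈ Finset.HasAntidiagonal.antidiagonal m,
        besselCoeff ω kp.1 * (x ^ 2) ^ kp.1 * (besselCoeff ω kp.2 * (y ^ 2) ^ kp.2) := by
  have ha : 0 < ω + 1 := by linarith
  have g1 : 0 < Real.Gamma (ω + 1) := Real.Gamma_pos_of_pos ha
  have hexp : ∀ θ, (x ^ 2 + y ^ 2 - 2 * x * y * Real.cos θ) ^ m * Real.sin θ ^ (2 * ω) =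
      ∑ j ∈ Finset.range (m + 1), ((-(2 * x * y)) ^ j * (x ^ 2 + y ^ 2) ^ (m - j) * m.choose j) *
        (Real.cos θ ^ j * Real.sin θ ^ (2 * ω)) := by
    intro θ
    rw [show x ^ 2 + y ^ 2 - 2 * x * y * Real.cos θ =
      (-(2 * x * y)) * Real.cos θ + (x ^ 2 + y ^ 2) by ring, add_pow, Finset.sum_mul]
    refine Finset.sum_congr rfl fun j _ => ?_
    rw [mul_pow]
    ring
  simp_rw [hexp]
  rw [intervalIntegral.integral_finsetSum (fun j _ =>
    (intervalIntegrable_mul_sin_rpow hω (by fun_prop)).const_mul _)]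
  simp_rw [intervalIntegral.integral_const_mul]
  rw [sum_range_eq_sum_even m _ (fun l => by rw [integral_cos_odd, mul_zero])]
  trans (Real.Gamma (ω + 1) ^ 2 / Real.Gamma (ω + 1 + m)) * ∑ l ∈ Finset.range (m / 2 + 1),
    ∑ ij ∈ Finset.HasAntidiagonal.antidiagonal (m - 2 * l),
      (x ^ 2) ^ (ij.1 + l) * (y ^ 2) ^ (ij.2 + l) *
        (1 / (ij.1.factorial * ij.2.factorial * l.factorial * Real.Gamma (ω + 1 + l)))
  · rw [Finset.mul_sum, Finset.mul_sum, Finset.mul_sum]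
    refine Finset.sum_congr rfl fun l hl => ?_
    rw [Finset.mem_range] at hl
    have hlm : 2 * l ≤ m := by omega
    have hc : (m.choose (2 * l) : ℝ) * (2 * l).factorial * (m - 2 * l).factorial = m.factorial := by
      exact_mod_cast Nat.choose_mul_factorial_mul_factorial hlm
    have g2 : 0 < Real.Gamma (ω + 1 + l) := Real.Gamma_pos_of_pos (by positivity)
    have g3 : 0 < Real.Gamma (ω + 1 + m) := Real.Gamma_pos_of_pos (by positivity)
    have h4 : (m.choose (2 * l) : ℝ) ≠ 0 := by exact_mod_cast (Nat.choose_pos hlm).ne'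
    have hpow : (x ^ 2 + y ^ 2) ^ (m - 2 * l) = (m - 2 * l).factorial *
        ∑ ij ∈ Finset.HasAntidiagonal.antidiagonal (m - 2 * l),
          (x ^ 2) ^ ij.1 / ij.1.factorial * ((y ^ 2) ^ ij.2 / ij.2.factorial) := by
      rw [← pow_add_div_factorial]
      field_simp
    rw [mul_left_comm (sinConst ω), sinConst_mul_integral_cos_even hω, hpow, besselCoeff, ← hc]
    have hsum : ∑ ij ∈ Finset.HasAntidiagonal.antidiagonal (m - 2 * l),
        (x ^ 2) ^ (ij.1 + l) * (y ^ 2) ^ (ij.2 + l) *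
          (1 / (ij.1.factorial * ij.2.factorial * l.factorial * Real.Gamma (ω + 1 + l))) =
        ((x ^ 2) ^ l * (y ^ 2) ^ l / (l.factorial * Real.Gamma (ω + 1 + l))) *
          ∑ ij ∈ Finset.HasAntidiagonal.antidiagonal (m - 2 * l),
            (x ^ 2) ^ ij.1 / ij.1.factorial * ((y ^ 2) ^ ij.2 / ij.2.factorial) := by
      rw [Finset.mul_sum]
      refine Finset.sum_congr rfl fun ij _ => ?_
      rw [pow_add, pow_add]
      field_simp
    rw [hsum, neg_pow, Even.neg_one_pow (even_two_mul l), one_mul, pow_mul (2 * x * y)]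
    generalize ∑ ij ∈ Finset.HasAntidiagonal.antidiagonal (m - 2 * l),
            (x ^ 2) ^ ij.1 / ij.1.factorial * ((y ^ 2) ^ ij.2 / ij.2.factorial) = S
    rw [show (2 * x * y) ^ 2 = 4 * x ^ 2 * y ^ 2 by ring, mul_pow, mul_pow]
    have : (0:ℝ) < (2 * l).factorial := by positivity
    have : (0:ℝ) < (m - 2 * l).factorial := by positivity
    field_simp
  · rw [sum_antidiagonal_sum_min m (fun i j l => (x ^ 2) ^ (i + l) * (y ^ 2) ^ (j + l) *
        (1 / (i.factorial * j.factorial * l.factorial * Real.Gamma (ω + 1 + l)))), Finset.mul_sum]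
    refine Finset.sum_congr rfl fun kp hkp => ?_
    rw [Finset.HasAntidiagonal.mem_antidiagonal] at hkp
    have hV := sum_inv_factorial_div_Gamma kp.1 kp.2 ha
    have hsum : ∑ l ∈ Finset.range (min kp.1 kp.2 + 1),
        (x ^ 2) ^ (kp.1 - l + l) * (y ^ 2) ^ (kp.2 - l + l) *
          (1 / ((kp.1 - l).factorial * (kp.2 - l).factorial * l.factorial *
            Real.Gamma (ω + 1 + l))) =
        (x ^ 2) ^ kp.1 * (y ^ 2) ^ kp.2 * (Real.Gamma (ω + 1 + kp.1 + kp.2) /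
        (kp.1.factorial * kp.2.factorial * Real.Gamma (ω + 1 + kp.1) *
          Real.Gamma (ω + 1 + kp.2))) := by
      rw [← hV, Finset.mul_sum]
      refine Finset.sum_congr rfl fun l hl => ?_
      rw [Finset.mem_range] at hl
      rw [Nat.sub_add_cancel (by omega), Nat.sub_add_cancel (by omega)]
    rw [hsum, show ω + 1 + kp.1 + kp.2 = ω + 1 + m by rw [← hkp]; push_cast; ring,
      besselCoeff, besselCoeff]
    have g3 : 0 < Real.Gamma (ω + 1 + m) := Real.Gamma_pos_of_pos (by positivity)
    have g4 : 0 < Real.Gamma (ω + 1 + kp.1) := Real.Gamma_pos_of_pos (by positivity)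
    have g5 : 0 < Real.Gamma (ω + 1 + kp.2) := Real.Gamma_pos_of_pos (by positivity)
    field_simp

/-- Gegenbauer's product formula for normalized Bessel functions. -/
lemma sinConst_mul_integral_normBessel {ω : ℝ} (hω : -(1 / 2) < ω) (x y s : ℝ) :
    sinConst ω * ∫ θ in (0:ℝ)..π,
        normBessel ω (Real.sqrt (x ^ 2 + y ^ 2 - 2 * x * y * Real.cos θ) * s) *
          Real.sin θ ^ (2 * ω) =
      normBessel ω (x * s) * normBessel ω (y * s) := by
  have hQ0 : ∀ θ, 0 ≤ x ^ 2 + y ^ 2 - 2 * x * y * Real.cos θ := fun θ => by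
    nlinarith [sq_nonneg (x - y * Real.cos θ), sq_nonneg (y * Real.sin θ),
      Real.sin_sq_add_cos_sq θ]
  have hQ1 : ∀ θ, x ^ 2 + y ^ 2 - 2 * x * y * Real.cos θ ≤ (|x| + |y|) ^ 2 := fun θ => by
    have h1 : -(x * y * Real.cos θ) ≤ |x| * |y| := by
      refine (neg_le_abs _).trans ?_
      rw [abs_mul, abs_mul]
      exact mul_le_of_le_one_right (by positivity) (Real.abs_cos_le_one θ)
    nlinarith [sq_abs x, sq_abs y]
  have h := intervalIntegral.hasSum_integral_of_dominated_convergence (μ := volume)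
    (a := 0) (b := π)
    (F := fun (m : ℕ) θ => besselCoeff ω m *
      (-((x ^ 2 + y ^ 2 - 2 * x * y * Real.cos θ) * s ^ 2 / 4)) ^ m * Real.sin θ ^ (2 * ω))
    (f := fun θ => normBessel ω (Real.sqrt (x ^ 2 + y ^ 2 - 2 * x * y * Real.cos θ) * s) *
          Real.sin θ ^ (2 * ω))
    (fun m θ => besselCoeff ω m * ((|x| + |y|) ^ 2 * s ^ 2 / 4) ^ m * ‖Real.sin θ ^ (2 * ω)‖)
    (fun m => (intervalIntegrable_mul_sin_rpow hω (by fun_prop)).aestronglyMeasurable_restrict_uIoc)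
    (fun m => ae_of_all _ fun θ _ => by
      rw [norm_mul, norm_mul, norm_pow, norm_neg, Real.norm_of_nonneg (besselCoeff_pos hω m).le,
        Real.norm_of_nonneg (by have := hQ0 θ; positivity)]
      have := (besselCoeff_pos hω m).le
      have := hQ0 θ
      gcongr
      exact hQ1 θ)
    (ae_of_all _ fun θ _ => (summable_besselCoeff hω (by positivity)).mul_right _)
    (by
      simp_rw [tsum_mul_right]
      exact (intervalIntegrable_sin_rpow hω).norm.const_mul _)
    (ae_of_all _ fun θ _ => by
      have h := (hasSum_normBessel hω
        (Real.sqrt (x ^ 2 + y ^ 2 - 2 * x * y * Real.cos θ) * s)).mul_right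
          (Real.sin θ ^ (2 * ω))
      rwa [mul_pow, Real.sq_sqrt (hQ0 θ)] at h)
  have h2 := h.mul_left (sinConst ω)
  have hx := hasSum_normBessel hω (x * s)
  have hy := hasSum_normBessel hω (y * s)
  rw [← h2.tsum_eq, ← hx.tsum_eq, ← hy.tsum_eq,
    tsum_mul_tsum_eq_tsum_sum_antidiagonal_of_summable_norm hx.summable.norm hy.summable.norm]
  refine tsum_congr fun m => ?_
  have e : ∀ θ, besselCoeff ω m *
      (-((x ^ 2 + y ^ 2 - 2 * x * y * Real.cos θ) * s ^ 2 / 4)) ^ m * Real.sin θ ^ (2 * ω) =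
      (besselCoeff ω m * (-(s ^ 2 / 4)) ^ m) *
        ((x ^ 2 + y ^ 2 - 2 * x * y * Real.cos θ) ^ m * Real.sin θ ^ (2 * ω)) := fun θ => by
    rw [show -((x ^ 2 + y ^ 2 - 2 * x * y * Real.cos θ) * s ^ 2 / 4) =
      (x ^ 2 + y ^ 2 - 2 * x * y * Real.cos θ) * (-(s ^ 2 / 4)) by ring, mul_pow]
    ring
  simp_rw [e]
  rw [intervalIntegral.integral_const_mul]
  trans (-(s ^ 2 / 4)) ^ m * (besselCoeff ω m * (sinConst ω * ∫ θ in (0:ℝ)..π,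
        (x ^ 2 + y ^ 2 - 2 * x * y * Real.cos θ) ^ m * Real.sin θ ^ (2 * ω)))
  · ring
  · rw [besselCoeff_mul_integral_pow hω, Finset.mul_sum]
    refine Finset.sum_congr rfl fun kp hkp => ?_
    rw [Finset.HasAntidiagonal.mem_antidiagonal] at hkp
    rw [← hkp, pow_add, show -((x * s) ^ 2 / 4) = x ^ 2 * (-(s ^ 2 / 4)) by ring,
      show -((y * s) ^ 2 / 4) = y ^ 2 * (-(s ^ 2 / 4)) by ring, mul_pow, mul_pow]
    ring

instance (n : ℕ) : IsFiniteMeasure (sphMeasure n) :=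
  inferInstanceAs (IsFiniteMeasure (volume : Measure (EuclideanSpace ℝ (Fin n))).toSphere)

lemma measurableSet_sphPos (n : ℕ) : MeasurableSet (sphPos n) := by
  have : sphPos n =
      ⋂ i, {x : Metric.sphere (0 : EuclideanSpace ℝ (Fin n)) 1 |
        0 < (x : EuclideanSpace ℝ (Fin n)) i} := by
    ext x; simp [sphPos]
  rw [this]
  exact MeasurableSet.iInter fun i => measurableSet_lt measurable_const (by fun_prop)

/-- The Dirichlet integral over the positive part of the unit sphere. -/
lemma integral_sphPos_prod_rpow {n : ℕ} (hn : 1 ≤ n) (b : Fin n → ℝ) (hb : ∀ i, 0 ≤ b i) :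
    (∫ y in sphPos n, ∏ i, ((y : EuclideanSpace ℝ (Fin n)) i) ^ (b i) ∂(sphMeasure n)) *
        (Real.Gamma ((n + ∑ i, b i) / 2) / 2) =
      ∏ i, Real.Gamma ((b i + 1) / 2) / 2 := by
  have : Nonempty (Fin n) := ⟨⟨0, hn⟩⟩
  set g : Fin n → ℝ → ℝ := fun i =>
    (Ioi (0:ℝ)).indicator fun t => t ^ (b i) * Real.exp (-t ^ (2:ℝ)) with hg
  set A : Metric.sphere (0 : EuclideanSpace ℝ (Fin n)) 1 → ℝ :=
    (sphPos n).indicator fun y => ∏ i, ((y : EuclideanSpace ℝ (Fin n)) i) ^ (b i) with hA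
  set B : ℝ → ℝ := fun r => r ^ (∑ i, b i) * Real.exp (-r ^ (2:ℝ)) with hB
  have hpt : ∀ (y : Metric.sphere (0 : EuclideanSpace ℝ (Fin n)) 1) (r : ℝ), 0 < r →
      ∏ i, g i (r * (y : EuclideanSpace ℝ (Fin n)) i) = A y * B r := by
    intro y r hr
    by_cases hy : y ∈ sphPos n
    · have h1 : ∀ i, g i (r * (y : EuclideanSpace ℝ (Fin n)) i) =
          ((y : EuclideanSpace ℝ (Fin n)) i) ^ (b i) *
            (r ^ (b i) * Real.exp (-(r ^ 2 * ((y : EuclideanSpace ℝ (Fin n)) i) ^ 2))) := by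
        intro i
        have hyi : 0 < (y : EuclideanSpace ℝ (Fin n)) i := hy i
        simp only [hg]
        rw [indicator_of_mem (mem_Ioi.2 (mul_pos hr hyi)), Real.mul_rpow hr.le hyi.le,
          Real.rpow_two, mul_pow]
        ring
      simp only [h1, hA, hB, indicator_of_mem hy, Finset.prod_mul_distrib]
      rw [← Real.exp_sum, Real.rpow_sum_of_pos hr, Finset.sum_neg_distrib, ← Finset.mul_sum]
      have h2 : ∑ i, ((y : EuclideanSpace ℝ (Fin n)) i) ^ 2 = 1 := by
        have := EuclideanSpace.norm_sq_eq (y : EuclideanSpace ℝ (Fin n))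
        rw [norm_eq_of_mem_sphere] at this
        simpa using this.symm
      rw [h2, mul_one, Real.rpow_two]
    · have hA0 : A y = 0 := indicator_of_notMem hy _
      rw [hA0, zero_mul]
      simp only [sphPos, mem_ofPred_eq, not_forall, not_lt] at hy
      obtain ⟨i, hi⟩ := hy
      refine Finset.prod_eq_zero (Finset.mem_univ i) (indicator_of_notMem ?_ _)
      rw [mem_Ioi, not_lt]
      exact mul_nonpos_of_nonneg_of_nonpos hr.le hi
  have hcart : ∫ z : EuclideanSpace ℝ (Fin n), ∏ i, g i (z i) =
      ∏ i, Real.Gamma ((b i + 1) / 2) / 2 := by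
    have h := (PiLp.volume_preserving_ofLp (Fin n)).integral_comp
      (MeasurableEquiv.toLp 2 (Fin n → ℝ)).symm.measurableEmbedding
      (fun z : Fin n → ℝ => ∏ i, g i (z i))
    rw [h, integral_fintype_prod_volume_eq_prod]
    refine Finset.prod_congr rfl fun i _ => ?_
    rw [integral_indicator measurableSet_Ioi,
      integral_rpow_mul_exp_neg_rpow two_pos (by linarith [hb i])]
    ring
  have hpolar : ∫ z : EuclideanSpace ℝ (Fin n), ∏ i, g i (z i) =
      (∫ y, A y ∂(sphMeasure n)) * ∫ r : Ioi (0:ℝ), B r ∂(.volumeIoiPow (n - 1)) := by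
    rw [← integral_prod_mul A (fun r : Ioi (0:ℝ) => B r)]
    have h := (Measure.measurePreserving_homeomorphUnitSphereProd
      (volume : Measure (EuclideanSpace ℝ (Fin n)))).integral_comp (Homeomorph.measurableEmbedding _)
      (fun p : Metric.sphere (0 : EuclideanSpace ℝ (Fin n)) 1 × Ioi (0:ℝ) => A p.1 * B p.2)
    rw [finrank_euclideanSpace_fin] at h
    rw [sphMeasure, ← h, ← restrict_compl_singleton (μ := volume) (0 : EuclideanSpace ℝ (Fin n)),
      ← integral_subtype_comap (measurableSet_singleton _).compl
        (fun z : EuclideanSpace ℝ (Fin n) => ∏ i, g i (z i)), restrict_compl_singleton]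
    refine integral_congr_ae (ae_of_all _ fun z => ?_)
    have hz : 0 < ‖(z : EuclideanSpace ℝ (Fin n))‖ := norm_pos_iff.2 z.2
    simp only
    rw [← hpt _ _ (homeomorphUnitSphereProd _ z).2.2]
    refine Finset.prod_congr rfl fun i _ => ?_
    simp [mul_inv_cancel_left₀ hz.ne']
  have hrad : ∫ r : Ioi (0:ℝ), B r ∂(.volumeIoiPow (n - 1)) =
      Real.Gamma ((n + ∑ i, b i) / 2) / 2 := by
    have hs : 0 ≤ ∑ i, b i := Finset.sum_nonneg fun i _ => hb i
    have hn' : (1:ℝ) ≤ n := by exact_mod_cast hn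
    simp only [Measure.volumeIoiPow, ENNReal.ofReal]
    rw [integral_withDensity_eq_integral_smul
        ((measurable_subtype_coe.pow_const _).real_toNNReal),
      integral_subtype_comap measurableSet_Ioi fun a : ℝ => Real.toNNReal (a ^ (n - 1)) • B a,
      setIntegral_congr_fun (g := fun r : ℝ => r ^ ((n:ℝ) - 1 + ∑ i, b i) * Real.exp (-r ^ (2:ℝ)))
        measurableSet_Ioi fun r hr => ?_,
      integral_rpow_mul_exp_neg_rpow two_pos (by linarith)]
    · rw [show (n:ℝ) - 1 + ∑ i, b i + 1 = n + ∑ i, b i by ring]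
      ring
    · have hr0 : 0 < r := hr
      simp only [hB]
      rw [NNReal.smul_def, Real.coe_toNNReal _ (pow_nonneg hr0.le _), smul_eq_mul,
        Real.rpow_add hr0, ← Nat.cast_pred hn, Real.rpow_natCast]
      ring
  rw [← hcart, hpolar, hrad, hA, integral_indicator (measurableSet_sphPos n)]

lemma hasSum_pi_prod {n : ℕ} (f : Fin n → ℕ → ℝ) (s : Fin n → ℝ)
    (hs : ∀ i, HasSum (f i) (s i)) :
    HasSum (fun k : Fin n → ℕ => ∏ i, f i (k i)) (∏ i, s i) := by
  induction n with
  | zero => simp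
  | succ n ih =>
    have h := ih (fun i => f i.succ) (fun i => s i.succ) (fun i => hs i.succ)
    set g : (Fin n → ℕ) → ℝ := fun k => ∏ i, f (Fin.succ i) (k i) with hg
    have hm : HasSum (fun q : ℕ × (Fin n → ℕ) => f 0 q.1 * g q.2) (s 0 * ∏ i, s (Fin.succ i)) := by
      clear_value g
      exact (hs 0).mul h (summable_mul_of_summable_norm (hs 0).summable.norm h.summable.norm)
    rw [← (Fin.consEquiv fun _ => ℕ).hasSum_iff]
    simpa [Function.comp_def, Fin.prod_univ_succ, hg] using hm

lemma sum_piAntidiag_prod_pow_div_factorial {n : ℕ} (t : Fin n → ℝ) (m : ℕ) :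
    ∑ k ∈ Finset.piAntidiag Finset.univ m, ∏ i, t i ^ k i / (k i).factorial =
      (∑ i, t i) ^ m / m.factorial := by
  rw [Finset.sum_pow_eq_sum_piAntidiag, Finset.sum_div]
  refine Finset.sum_congr rfl fun k hk => ?_
  rw [Finset.mem_piAntidiag] at hk
  have h := Nat.multinomial_spec Finset.univ k
  rw [hk.1] at h
  have h' : (∏ i, ((k i).factorial : ℝ)) * Nat.multinomial Finset.univ k = m.factorial := by
    exact_mod_cast h
  have h0 : (∏ i, ((k i).factorial : ℝ)) ≠ 0 :=
    Finset.prod_ne_zero_iff.2 fun i _ => by positivity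
  rw [Finset.prod_div_distrib, ← h']
  have h1 : (Nat.multinomial Finset.univ k : ℝ) ≠ 0 := by
    exact_mod_cast (Nat.multinomial_pos _ _).ne'
  field_simp

lemma Summable.pi_prod {n : ℕ} (f : Fin n → ℕ → ℝ) (hf : ∀ i, Summable (f i)) :
    Summable (fun k : Fin n → ℕ => ∏ i, f i (k i)) :=
  (hasSum_pi_prod f _ fun i => (hf i).hasSum).summable

lemma sphConst_pos {n : ℕ} (hn : 1 ≤ n) (γ : Fin n → ℝ) (hγ : ∀ i, 0 < γ i) :
    0 < sphConst n γ := by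
  have h := integral_sphPos_prod_rpow hn γ fun i => (hγ i).le
  have h0 : 0 < ∏ i, Real.Gamma ((γ i + 1) / 2) / 2 :=
    Finset.prod_pos fun i _ => div_pos (Real.Gamma_pos_of_pos (by linarith [hγ i])) two_pos
  have hs : 0 ≤ ∑ i, γ i := Finset.sum_nonneg fun i _ => (hγ i).le
  have hn' : (1:ℝ) ≤ n := by exact_mod_cast hn
  have h1 : 0 < Real.Gamma ((n + ∑ i, γ i) / 2) / 2 :=
    div_pos (Real.Gamma_pos_of_pos (by linarith)) two_pos
  rw [← h] at h0
  exact pos_of_mul_pos_left h0 h1.le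

lemma prod_besselCoeff_mul_integral_sphPos {n : ℕ} (hn : 1 ≤ n) (γ : Fin n → ℝ)
    (hγ : ∀ i, 0 < γ i) (k : Fin n → ℕ) :
    (∏ i, besselCoeff ((γ i - 1) / 2) (k i)) *
        ∫ y in sphPos n, ∏ i, ((y : EuclideanSpace ℝ (Fin n)) i) ^ (γ i + 2 * k i)
          ∂(sphMeasure n) =
      sphConst n γ * (Real.Gamma ((n + ∑ i, γ i) / 2) /
        Real.Gamma ((n + ∑ i, γ i) / 2 + ((∑ i, k i : ℕ) : ℝ))) * ∏ i, (1 / (k i).factorial : ℝ) := by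
  have h0 := integral_sphPos_prod_rpow hn γ fun i => (hγ i).le
  have hk := integral_sphPos_prod_rpow hn (fun i => γ i + 2 * k i) fun i => by
    have := hγ i; positivity
  have hs : 0 ≤ ∑ i, γ i := Finset.sum_nonneg fun i _ => (hγ i).le
  have hn' : (1:ℝ) ≤ n := by exact_mod_cast hn
  have e1 : (n + ∑ i, (γ i + 2 * (k i : ℝ))) / 2 =
      (n + ∑ i, γ i) / 2 + ((∑ i, k i : ℕ) : ℝ) := by
    rw [Finset.sum_add_distrib, ← Finset.mul_sum]
    push_cast
    ring
  rw [e1] at hk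
  rw [← sphConst] at h0
  have g0 : 0 < Real.Gamma ((n + ∑ i, γ i) / 2) := Real.Gamma_pos_of_pos (by linarith)
  have gk : 0 < Real.Gamma ((n + ∑ i, γ i) / 2 + ((∑ i, k i : ℕ) : ℝ)) :=
    Real.Gamma_pos_of_pos (by positivity)
  have e2 : (∏ i, besselCoeff ((γ i - 1) / 2) (k i)) *
      ∏ i, Real.Gamma ((γ i + 2 * k i + 1) / 2) / 2 =
      (∏ i, Real.Gamma ((γ i + 1) / 2) / 2) * ∏ i, (1 / (k i).factorial : ℝ) := by
    rw [← Finset.prod_mul_distrib, ← Finset.prod_mul_distrib]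
    refine Finset.prod_congr rfl fun i _ => ?_
    have := hγ i
    have g : 0 < Real.Gamma ((γ i + 1) / 2 + k i) := Real.Gamma_pos_of_pos (by positivity)
    rw [besselCoeff, show (γ i - 1) / 2 + 1 = (γ i + 1) / 2 by ring,
      show (γ i + 2 * k i + 1) / 2 = (γ i + 1) / 2 + k i by ring]
    generalize Real.Gamma ((γ i + 1) / 2 + k i) = G at *
    field_simp
  rw [← hk, ← h0] at e2
  generalize Real.Gamma ((n + ∑ i, γ i) / 2 + ((∑ i, k i : ℕ) : ℝ)) = G at *
  generalize Real.Gamma ((n + ∑ i, γ i) / 2) = G' at *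
  rw [mul_div_assoc', div_mul_eq_mul_div, eq_div_iff gk.ne']
  linear_combination 2 * e2

lemma hasSum_of_sum_fiber {n : ℕ} {F : (Fin n → ℕ) → ℝ} {S : ℝ} (hF : HasSum F S) :
    HasSum (fun m : ℕ => ∑ k ∈ Finset.piAntidiag Finset.univ m, F k) S := by
  have h := (Equiv.sigmaFiberEquiv fun k : Fin n → ℕ => ∑ i, k i).hasSum_iff.mpr hF
  refine h.sigma fun m => ?_
  have hset : {k : Fin n → ℕ | ∑ i, k i = m} =
      ((Finset.piAntidiag Finset.univ m : Finset (Fin n → ℕ)) : Set (Fin n → ℕ)) := by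
    ext k; simp
  have h2 : HasSum (F ∘ ((↑) : {k : Fin n → ℕ | ∑ i, k i = m} → _))
      (∑ k ∈ Finset.piAntidiag Finset.univ m, F k) := by
    rw [hset]
    exact Finset.hasSum _ F
  exact h2

lemma integral_sphPos_prod_besselCoeff {n : ℕ} (hn : 1 ≤ n) (γ : Fin n → ℝ)
    (hγ : ∀ i, 0 < γ i) (ξ : EuclideanSpace ℝ (Fin n)) (r : ℝ) (k : Fin n → ℕ) :
    ∫ y in sphPos n, (∏ i, besselCoeff ((γ i - 1) / 2) (k i) *
      (-((r * (y : EuclideanSpace ℝ (Fin n)) i * ξ i) ^ 2 / 4)) ^ k i) *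
        ∏ i, ((y : EuclideanSpace ℝ (Fin n)) i) ^ (γ i) ∂(sphMeasure n) =
      sphConst n γ * (Real.Gamma ((n + ∑ i, γ i) / 2) /
        Real.Gamma ((n + ∑ i, γ i) / 2 + ((∑ i, k i : ℕ) : ℝ))) * (-(r ^ 2 / 4)) ^ (∑ i, k i) *
        ∏ i, (ξ i ^ 2) ^ k i / (k i).factorial := by
  trans ((∏ i, besselCoeff ((γ i - 1) / 2) (k i)) * ∫ y in sphPos n,
    ∏ i, ((y : EuclideanSpace ℝ (Fin n)) i) ^ (γ i + 2 * k i) ∂(sphMeasure n)) *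
    ((-(r ^ 2 / 4)) ^ (∑ i, k i) * ∏ i, (ξ i ^ 2) ^ k i)
  · rw [mul_right_comm, ← integral_const_mul]
    refine setIntegral_congr_fun (measurableSet_sphPos n) fun y hy => ?_
    simp only
    rw [← Finset.prod_pow_eq_pow_sum, ← Finset.prod_mul_distrib, ← Finset.prod_mul_distrib,
      ← Finset.prod_mul_distrib, ← Finset.prod_mul_distrib]
    refine Finset.prod_congr rfl fun i _ => ?_
    have hyi : 0 < (y : EuclideanSpace ℝ (Fin n)) i := hy i
    rw [Real.rpow_add hyi, show (2 : ℝ) * k i = ((2 * k i : ℕ) : ℝ) by push_cast; ring,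
      Real.rpow_natCast, pow_mul, show -((r * (y : EuclideanSpace ℝ (Fin n)) i * ξ i) ^ 2 / 4) =
        -(r ^ 2 / 4) * ξ i ^ 2 * (y : EuclideanSpace ℝ (Fin n)) i ^ 2 by ring, mul_pow, mul_pow]
    ring
  · rw [prod_besselCoeff_mul_integral_sphPos hn γ hγ]
    simp_rw [div_eq_mul_inv, Finset.prod_mul_distrib]
    simp only [Finset.prod_const_one]
    ring

lemma abs_coe_sphere_apply_le {n : ℕ} (y : Metric.sphere (0 : EuclideanSpace ℝ (Fin n)) 1)
    (i : Fin n) : |(y : EuclideanSpace ℝ (Fin n)) i| ≤ 1 := by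
  have := PiLp.norm_apply_le (y : EuclideanSpace ℝ (Fin n)) i
  rwa [norm_eq_of_mem_sphere] at this

lemma norm_prod_besselCoeff_mul_le {n : ℕ} (γ : Fin n → ℝ) (hγ : ∀ i, 0 < γ i)
    (ξ : EuclideanSpace ℝ (Fin n)) (r : ℝ) (k : Fin n → ℕ)
    (y : Metric.sphere (0 : EuclideanSpace ℝ (Fin n)) 1) (hy : y ∈ sphPos n) :
    ‖(∏ i, besselCoeff ((γ i - 1) / 2) (k i) *
      (-((r * (y : EuclideanSpace ℝ (Fin n)) i * ξ i) ^ 2 / 4)) ^ k i) *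
        ∏ i, ((y : EuclideanSpace ℝ (Fin n)) i) ^ (γ i)‖ ≤
      ∏ i, besselCoeff ((γ i - 1) / 2) (k i) * ((r * ξ i) ^ 2 / 4) ^ k i := by
  rw [norm_mul, norm_prod, norm_prod]
  refine (mul_le_of_le_one_right (Finset.prod_nonneg fun i _ => norm_nonneg _) ?_).trans ?_
  · refine Finset.prod_le_one (fun i _ => norm_nonneg _) fun i _ => ?_
    have hyi : 0 < (y : EuclideanSpace ℝ (Fin n)) i := hy i
    rw [Real.norm_of_nonneg (by positivity)]
    exact Real.rpow_le_one hyi.le ((le_abs_self _).trans (abs_coe_sphere_apply_le y i)) (hγ i).le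
  · refine Finset.prod_le_prod (fun i _ => norm_nonneg _) fun i _ => ?_
    have hc := besselCoeff_pos (show -(1 / 2) < (γ i - 1) / 2 by linarith [hγ i]) (k i)
    rw [norm_mul, Real.norm_of_nonneg hc.le, norm_pow, norm_neg,
      Real.norm_of_nonneg (by positivity)]
    gcongr ?_ * (?_ / 4) ^ k i
    rw [show (r * (y : EuclideanSpace ℝ (Fin n)) i * ξ i) ^ 2 =
      (r * ξ i) ^ 2 * ((y : EuclideanSpace ℝ (Fin n)) i) ^ 2 by ring]
    exact mul_le_of_le_one_right (by positivity)
      ((sq_le_one_iff_abs_le_one _).2 (abs_coe_sphere_apply_le y i))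

lemma hasSum_integral_sphPos_prod_besselCoeff {n : ℕ} (γ : Fin n → ℝ) (hγ : ∀ i, 0 < γ i)
    (ξ : EuclideanSpace ℝ (Fin n)) (r : ℝ) :
    HasSum (fun k : Fin n → ℕ => ∫ y in sphPos n, (∏ i, besselCoeff ((γ i - 1) / 2) (k i) *
        (-((r * (y : EuclideanSpace ℝ (Fin n)) i * ξ i) ^ 2 / 4)) ^ k i) *
          ∏ i, ((y : EuclideanSpace ℝ (Fin n)) i) ^ (γ i) ∂(sphMeasure n))
      (∫ y in sphPos n, (∏ i, normBessel ((γ i - 1) / 2)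
        (r * (y : EuclideanSpace ℝ (Fin n)) i * ξ i)) *
        ∏ i, ((y : EuclideanSpace ℝ (Fin n)) i) ^ (γ i) ∂(sphMeasure n)) := by
  have hω : ∀ i, -(1 / 2) < (γ i - 1) / 2 := fun i => by linarith [hγ i]
  have hsum : Summable fun k : Fin n → ℕ =>
      ∏ i, besselCoeff ((γ i - 1) / 2) (k i) * ((r * ξ i) ^ 2 / 4) ^ k i :=
    Summable.pi_prod (fun i j => besselCoeff ((γ i - 1) / 2) j * ((r * ξ i) ^ 2 / 4) ^ j)
      fun i => summable_besselCoeff (hω i) (by positivity)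
  refine hasSum_integral_of_dominated_convergence
    (fun k _ => ∏ i, besselCoeff ((γ i - 1) / 2) (k i) * ((r * ξ i) ^ 2 / 4) ^ k i)
    (fun k => ?_)
    (fun k => (ae_restrict_iff' (measurableSet_sphPos n)).2
      (ae_of_all _ fun y hy => norm_prod_besselCoeff_mul_le γ hγ ξ r k y hy))
    (ae_of_all _ fun _ => hsum) (integrable_const _) (ae_of_all _ fun y => ?_)
  · refine Measurable.aestronglyMeasurable (Measurable.mul ?_ ?_) <;>
    · refine Finset.measurable_prod _ fun i _ => ?_
      fun_prop
  · refine HasSum.mul_right _ ?_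
    exact hasSum_pi_prod (fun i j => besselCoeff ((γ i - 1) / 2) j *
      (-((r * (y : EuclideanSpace ℝ (Fin n)) i * ξ i) ^ 2 / 4)) ^ j) _
      fun i => hasSum_normBessel (hω i) _

lemma integral_sphPos_prod_normBessel {n : ℕ} (hn : 1 ≤ n) (γ : Fin n → ℝ) (hγ : ∀ i, 0 < γ i)
    (ξ : EuclideanSpace ℝ (Fin n)) (hξ : ‖ξ‖ = 1) (r : ℝ) :
    ∫ y in sphPos n, (∏ i, normBessel ((γ i - 1) / 2)
        (r * (y : EuclideanSpace ℝ (Fin n)) i * ξ i)) *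
        ∏ i, ((y : EuclideanSpace ℝ (Fin n)) i) ^ (γ i) ∂(sphMeasure n) =
      sphConst n γ * normBessel (((n : ℝ) + (∑ i, γ i) - 2) / 2) r := by
  have hn' : (1:ℝ) ≤ n := by exact_mod_cast hn
  have hs : 0 < ∑ i, γ i :=
    Finset.sum_pos (fun i _ => hγ i) ⟨⟨0, hn⟩, Finset.mem_univ _⟩
  have h := hasSum_integral_sphPos_prod_besselCoeff γ hγ ξ r
  simp_rw [integral_sphPos_prod_besselCoeff hn γ hγ ξ r] at h
  have hfib := hasSum_of_sum_fiber h
  have hN : -(1 / 2) < ((n : ℝ) + (∑ i, γ i) - 2) / 2 := by linarith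
  refine hfib.unique ?_
  refine HasSum.congr_fun ((hasSum_normBessel hN r).mul_left (sphConst n γ)) fun m => ?_
  have hξ2 : ∑ i, ξ i ^ 2 = 1 := by
    have := EuclideanSpace.norm_sq_eq ξ
    rw [hξ] at this
    simpa using this.symm
  trans ∑ k ∈ Finset.piAntidiag Finset.univ m, sphConst n γ * (Real.Gamma ((n + ∑ i, γ i) / 2) /
        Real.Gamma ((n + ∑ i, γ i) / 2 + m)) * (-(r ^ 2 / 4)) ^ m *
        ∏ i, (ξ i ^ 2) ^ k i / ((k i).factorial : ℝ)
  · refine Finset.sum_congr rfl fun k hk => ?_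
    rw [Finset.mem_piAntidiag] at hk
    rw [hk.1]
  · rw [← Finset.mul_sum, sum_piAntidiag_prod_pow_div_factorial, hξ2, one_pow, besselCoeff,
      show ((n : ℝ) + (∑ i, γ i) - 2) / 2 + 1 = (n + ∑ i, γ i) / 2 by ring]
    ring

lemma multiT_besselKernel {n : ℕ} (γ : Fin n → ℝ) (hγ : ∀ i, 0 < γ i)
    (ξ x y : Fin n → ℝ) :
    multiT n γ (fun z => besselKernel n γ z ξ) x y =
      besselKernel n γ x ξ * besselKernel n γ y ξ := by
  unfold multiT besselKernel
  simp_rw [← Finset.prod_mul_distrib]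
  rw [volume_pi, Measure.restrict_pi_pi, integral_fintype_prod_eq_prod
    (f := fun i a => normBessel ((γ i - 1) / 2)
      (Real.sqrt ((x i) ^ 2 + (y i) ^ 2 - 2 * x i * y i * Real.cos a) * ξ i) *
        Real.sin a ^ (γ i - 1)), ← Finset.prod_mul_distrib]
  refine Finset.prod_congr rfl fun i _ => ?_
  have h := sinConst_mul_integral_normBessel (show -(1 / 2) < (γ i - 1) / 2 by linarith [hγ i])
    (x i) (y i) (ξ i)
  rw [intervalIntegral.integral_of_le Real.pi_pos.le, sinConst,
    show (γ i - 1) / 2 + 1 = (γ i + 1) / 2 by ring,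
    show (γ i - 1) / 2 + 1 / 2 = γ i / 2 by ring,
    show 2 * ((γ i - 1) / 2) = γ i - 1 by ring] at h
  exact h

lemma sMean_besselKernel_apply {n : ℕ} (hn : 1 ≤ n) (γ : Fin n → ℝ) (hγ : ∀ i, 0 < γ i)
    (ξ : EuclideanSpace ℝ (Fin n)) (hξ : ‖ξ‖ = 1) (x : Fin n → ℝ) (r : ℝ) :
    sMean n γ (fun z => besselKernel n γ z ξ) x r =
      besselKernel n γ x ξ * normBessel (((n : ℝ) + (∑ i, γ i) - 2) / 2) r := by
  unfold sMean
  simp_rw [multiT_besselKernel γ hγ, mul_assoc]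
  rw [integral_const_mul]
  have h := integral_sphPos_prod_normBessel hn γ hγ ξ hξ r
  simp only [besselKernel] at h ⊢
  rw [h]
  have := (sphConst_pos hn γ hγ).ne'
  field_simp

lemma multiT_mul_const (n : ℕ) (γ : Fin n → ℝ) (f : (Fin n → ℝ) → ℝ) (c : ℝ)
    (x y : Fin n → ℝ) :
    multiT n γ (fun z => f z * c) x y = multiT n γ f x y * c := by
  unfold multiT
  simp_rw [mul_right_comm _ c]
  rw [integral_mul_const, mul_assoc]

lemma sMean_mul_const (n : ℕ) (γ : Fin n → ℝ) (f : (Fin n → ℝ) → ℝ) (c : ℝ)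
    (x : Fin n → ℝ) (r : ℝ) :
    sMean n γ (fun z => f z * c) x r = sMean n γ f x r * c := by
  unfold sMean
  simp_rw [multiT_mul_const, mul_right_comm _ c]
  rw [integral_mul_const, mul_assoc]

/-- The weighted spherical mean of the Bessel kernel is a Bessel multiplier:
`M_μ^γ 𝐣_γ(·, ξ) = 𝐣_γ(x, ξ) j_{(n+|γ|−2)/2}(μ)`, and consequently
`I_{λ,μ}^γ 𝐣_γ(·, ξ) = 𝐣_γ(x, ξ) j_{(n+|γ|−2)/2}(μ) j_{(n+|γ|−2)/2}(λ)`. -/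
theorem sMean_besselKernel (n : ℕ) (hn : 1 ≤ n) (γ : Fin n → ℝ) (hγ : ∀ i, 0 < γ i)
    (ξ : EuclideanSpace ℝ (Fin n)) (hξ : ‖ξ‖ = 1)
    (x : Fin n → ℝ) (lam mu : ℝ) (hlam : 0 < lam) (hmu : 0 < mu) :
    sMean n γ (fun z => besselKernel n γ z ξ) x mu =
        besselKernel n γ x ξ * normBessel (((n : ℝ) + (∑ i, γ i) - 2) / 2) mu ∧
      iMean n γ (fun z => besselKernel n γ z ξ) x lam mu =
        besselKernel n γ x ξ * normBessel (((n : ℝ) + (∑ i, γ i) - 2) / 2) mu *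
          normBessel (((n : ℝ) + (∑ i, γ i) - 2) / 2) lam := by
  refine ⟨sMean_besselKernel_apply hn γ hγ ξ hξ x mu, ?_⟩
  unfold iMean
  simp_rw [sMean_besselKernel_apply hn γ hγ ξ hξ _ mu]
  rw [sMean_mul_const, sMean_besselKernel_apply hn γ hγ ξ hξ x lam]
  ring
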